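/- arXiv:2510.01422 — 2 statements merged into one kernel-verified Lean document; each statement's English description precedes it below -/
import Mathlib

section
/- Infraoscillation (norm 1 case): let {f_n} ⊆ ℤ[θ] be a |·|_θ-Cauchy sequence such that |f_n|_θ does not converge to 0. Then there exist an integer m and an index N such that |f_n|_θ ∈ {θ^m, θ^{m+1}, θ^{m+2}, θ^{m+3}, θ^{m+4}} for all n ≥ N. -/
/-!
The infranorm is, up to a bounded factor, the archimedean absolute value of the Galois conjugate:
for `0 ≠ x ∈ ℤ[θ]` the infranorm is an integral power `θⁿ` with `θⁿ ≤ |x'| < θⁿ⁺³` (`norm_bounds`).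

For `x ∈ O_K⁰` write `x = ± Σ_{i ≥ v} b_i θⁱ` with `b_v ≠ 0`, where `v = v(x)`. Conjugation turns
this into `x' = ± Σ_{i ≥ v} b_i θ⁻ⁱ`, whose leading term gives `|x'| ≥ θ⁻ᵛ` and whose digit bound
`b_i ≤ a - 1` gives `|x'| < θ²⁻ᵛ` (`vval_bounds`). The elements of `O_K¹` cost one more factor `θ`,
since `θ⁻¹ < |T'| < 1`. For `v` to be meaningful every totally positive element must have a finite
expansion. This is `greedy`: for `r ∈ [0, 1)` totally nonnegative, `θr < θ` implies `θr ≤ (θr)'`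
(`Cj.le_conj`), so the next greedy remainder `θr - ⌊θr⌋` is again totally nonnegative, while its
conjugate has shrunk by a factor of at least `θ`; once the conjugate is below `1` the norm of the
remainder is a nonnegative integer below `1`, and the remainder is `0`.

Consequently the conjugates of an infranorm-Cauchy sequence form a Cauchy sequence in `ℝ`, and if the
infranorms do not tend to `0` then `|f_n'|` eventually stays within a factor `θ` of some nonzero
`|L|`. The exponent of the infranorm of `f_n` is then confined to five consecutive integers.
-/

noncomputable section

/-- The real quadratic unit `θ = (a + √(a²−4))/2`, the larger root of `θ² = aθ − 1`
(the norm `N(θ) = 1` case, `a ≥ 3`). -/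
def theta1 (a : ℕ) : ℝ := ((a : ℝ) + Real.sqrt ((a : ℝ) ^ 2 - 4)) / 2

/-- Membership in the ring `ℤ[θ]`. -/
def inR1 (a : ℕ) (x : ℝ) : Prop := ∃ p q : ℤ, x = (p : ℝ) + (q : ℝ) * theta1 a

/-- A finite integer sequence, supported in `[m, M]`, is admissible (norm `1` case) if all its
entries lie in `{0, …, a−1}` and it contains no forbidden block: no indices `i < j` with
`b_i = b_j = a−1` and `b_k = a−2` for all `i < k < j`. -/
def AdmissibleOn1 (a : ℕ) (m M : ℤ) (b : ℤ → ℤ) : Prop :=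
  (∀ i, b i ≠ 0 → m ≤ i ∧ i ≤ M) ∧
  (∀ i, 0 ≤ b i ∧ b i ≤ (a : ℤ) - 1) ∧
  ¬ ∃ i j : ℤ, i < j ∧ b i = (a : ℤ) - 1 ∧ b j = (a : ℤ) - 1 ∧
      ∀ k, i < k → k < j → b k = (a : ℤ) - 2

/-- The set `ℤ_θ` of θ-integers: signed sums `± Σ_{i=0}^{M} b_i θ^i` with `(b_i)` admissible. -/
def Ztheta1 (a : ℕ) : Set ℝ :=
  { x | ∃ (ε : ℤ) (M : ℤ) (b : ℤ → ℤ), (ε = 1 ∨ ε = -1) ∧ 0 ≤ M ∧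
      AdmissibleOn1 a 0 M b ∧
      x = (ε : ℝ) * ∑ i ∈ Finset.Icc (0 : ℤ) M, (b i : ℝ) * theta1 a ^ i }

/-- `x ∈ O_K⁰`: `x ∈ ℤ[θ]` and `x` has the same sign as its Galois conjugate `x'`. -/
def inOK0 (a : ℕ) (x : ℝ) : Prop :=
  ∃ p q : ℤ, x = (p : ℝ) + (q : ℝ) * theta1 a ∧
    0 ≤ x * ((p : ℝ) + (q : ℝ) * (theta1 a)⁻¹)

/-- `x ∈ O_K¹`: `x ∈ ℤ[θ]` and `x` has sign opposite to its Galois conjugate `x'`. -/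
def inOK1 (a : ℕ) (x : ℝ) : Prop :=
  ∃ p q : ℤ, x = (p : ℝ) + (q : ℝ) * theta1 a ∧
    x * ((p : ℝ) + (q : ℝ) * (theta1 a)⁻¹) ≤ 0

/-- `v(x) = max { k : ℤ | x / θ^k ∈ ℤ_θ }` (as a supremum in `ℤ`). -/
def vval1 (a : ℕ) (x : ℝ) : ℤ := sSup { k : ℤ | x / theta1 a ^ k ∈ Ztheta1 a }

open Classical in
/-- The θ-adic infranorm (norm `1` case): for nonzero `x ∈ O_K⁰` it is `θ^{−v(x)}`, and for
nonzero `x ∈ O_K¹` it is `|T·x|_θ` where `T = θ − 1`; `|0|_θ = 0`. -/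
def thNorm1 (a : ℕ) (x : ℝ) : ℝ :=
  if x = 0 then 0
  else if inOK0 a x then theta1 a ^ (-vval1 a x)
  else theta1 a ^ (-vval1 a ((theta1 a - 1) * x))

/-- A sequence in `ℝ` is `|·|_θ`-Cauchy. -/
def IsThCauchy1 (a : ℕ) (x : ℕ → ℝ) : Prop :=
  ∀ ε : ℝ, 0 < ε → ∃ N : ℕ, ∀ i j : ℕ, N ≤ i → N ≤ j → thNorm1 a (x i - x j) < ε

/-- `y` is the Galois conjugate of `x ∈ ℤ[θ]`, as a relation on the reals. It is functional by
`Cj.unique`. -/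
def Cj (a : ℕ) (x y : ℝ) : Prop :=
  ∃ p q : ℤ, x = (p : ℝ) + (q : ℝ) * theta1 a ∧ y = (p : ℝ) + (q : ℝ) * (theta1 a)⁻¹

/-! ### The unit `θ` -/

section
variable {a : ℕ}

lemma sqrt_sq' (ha : 3 ≤ a) : Real.sqrt ((a : ℝ) ^ 2 - 4) ^ 2 = (a : ℝ) ^ 2 - 4 := by
  have : (3 : ℝ) ≤ a := by exact_mod_cast ha
  exact Real.sq_sqrt (by nlinarith)

lemma theta_sq (ha : 3 ≤ a) : theta1 a ^ 2 = a * theta1 a - 1 := by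
  have := sqrt_sq' ha
  unfold theta1
  nlinarith

lemma theta_gt (ha : 3 ≤ a) : (a : ℝ) - 1 < theta1 a := by
  have h3 : (3 : ℝ) ≤ a := by exact_mod_cast ha
  have : (a : ℝ) - 2 < Real.sqrt ((a : ℝ) ^ 2 - 4) := Real.lt_sqrt_of_sq_lt (by nlinarith)
  unfold theta1
  linarith

lemma theta_gt_two (ha : 3 ≤ a) : 2 < theta1 a := by
  have h3 : (3 : ℝ) ≤ a := by exact_mod_cast ha
  linarith [theta_gt ha]

lemma theta_pos (ha : 3 ≤ a) : 0 < theta1 a := by linarith [theta_gt_two ha]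

lemma theta_inv (ha : 3 ≤ a) : (theta1 a)⁻¹ = a - theta1 a := by
  have h := theta_pos ha
  have := theta_sq ha
  rw [inv_eq_iff_eq_inv, eq_comm, inv_eq_of_mul_eq_one_left]
  nlinarith

lemma theta_inv_pos (ha : 3 ≤ a) : 0 < (theta1 a)⁻¹ := inv_pos.mpr (theta_pos ha)

lemma theta_inv_lt (ha : 3 ≤ a) : (theta1 a)⁻¹ < 1 / 2 := by
  have := theta_gt_two ha
  rw [inv_lt_comm₀ (theta_pos ha) (by norm_num)]
  linarith

lemma theta_lt (ha : 3 ≤ a) : theta1 a < a := by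
  linarith [theta_inv ha, theta_inv_pos ha]

/-! ### Conjugation -/

lemma norm_eq (ha : 3 ≤ a) (p q : ℤ) :
    ((p : ℝ) + q * theta1 a) * (p + q * (theta1 a)⁻¹) = ((p ^ 2 + a * p * q + q ^ 2 : ℤ) : ℝ) := by
  have := theta_sq ha
  rw [theta_inv ha]
  push_cast
  linear_combination (-(q : ℝ) ^ 2) * this

/-- The norm form is anisotropic because `(a - 1)² < a² - 4 < a²`. -/
lemma norm_form_zero (ha : 3 ≤ a) (p q : ℤ) (h : p ^ 2 + a * p * q + q ^ 2 = 0) :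
    p = 0 ∧ q = 0 := by
  have hq : q = 0 := by
    by_contra hq
    have h1 : (2 * p + a * q) ^ 2 = ((a : ℤ) ^ 2 - 4) * q ^ 2 := by linear_combination 4 * h
    have h2 : q ∣ 2 * p + a * q := by
      rw [← Int.pow_dvd_pow_iff (n := 2) (by norm_num), h1]
      exact Dvd.intro_left _ rfl
    obtain ⟨d, hd⟩ := h2
    rw [hd] at h1
    have h3 : d ^ 2 = (a : ℤ) ^ 2 - 4 := by
      have : q ^ 2 ≠ 0 := pow_ne_zero _ hq
      apply mul_right_cancel₀ this
      linear_combination h1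
    have h4 : (3 : ℤ) ≤ a := by exact_mod_cast ha
    rw [← sq_abs] at h3
    have h5 := abs_nonneg d
    have h6 : |d| < a := by nlinarith
    have h7 : (a : ℤ) - 1 < |d| := by nlinarith
    omega
  subst hq
  simpa using h

/-- The norm `x * x'` is an integer and vanishes only at `0`. -/
lemma Cj.eq_zero (ha : 3 ≤ a) {x y : ℝ} (h : Cj a x y) (h0 : |x * y| < 1) : x = 0 ∧ y = 0 := by
  obtain ⟨p, q, rfl, rfl⟩ := h
  rw [norm_eq ha, ← Int.cast_abs] at h0
  have : |p ^ 2 + a * p * q + q ^ 2| < 1 := by exact_mod_cast h0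
  obtain ⟨rfl, rfl⟩ := norm_form_zero ha p q (Int.abs_lt_one_iff.mp this)
  simp

lemma Cj.sub {x y x' y' : ℝ} (h : Cj a x y) (h' : Cj a x' y') : Cj a (x - x') (y - y') := by
  obtain ⟨p, q, rfl, rfl⟩ := h
  obtain ⟨p', q', rfl, rfl⟩ := h'
  exact ⟨p - p', q - q', by push_cast; ring, by push_cast; ring⟩

lemma Cj.add {x y x' y' : ℝ} (h : Cj a x y) (h' : Cj a x' y') : Cj a (x + x') (y + y') := by
  obtain ⟨p, q, rfl, rfl⟩ := h
  obtain ⟨p', q', rfl, rfl⟩ := h'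
  exact ⟨p + p', q + q', by push_cast; ring, by push_cast; ring⟩

lemma Cj.mul (ha : 3 ≤ a) {x y x' y' : ℝ} (h : Cj a x y) (h' : Cj a x' y') :
    Cj a (x * x') (y * y') := by
  obtain ⟨p, q, rfl, rfl⟩ := h
  obtain ⟨p', q', rfl, rfl⟩ := h'
  have := theta_sq ha
  refine ⟨p * p' - q * q', p * q' + q * p' + a * q * q', ?_, ?_⟩
  · push_cast
    linear_combination (q : ℝ) * q' * this
  · rw [theta_inv ha]
    push_cast
    linear_combination (q : ℝ) * q' * this

lemma Cj.int (n : ℤ) : Cj a n n := ⟨n, 0, by simp, by simp⟩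

lemma Cj.theta : Cj a (theta1 a) (theta1 a)⁻¹ := ⟨0, 1, by simp, by simp⟩

lemma Cj.theta_inv' (ha : 3 ≤ a) : Cj a (theta1 a)⁻¹ (theta1 a) :=
  ⟨a, -1, by rw [theta_inv ha]; push_cast; ring, by rw [theta_inv ha]; push_cast; ring⟩

lemma Cj.pow (ha : 3 ≤ a) {x y : ℝ} (h : Cj a x y) (n : ℕ) : Cj a (x ^ n) (y ^ n) := by
  induction n with
  | zero => simpa using Cj.int (a := a) 1
  | succ k ih => rw [pow_succ, pow_succ]; exact ih.mul ha h

lemma Cj.zpow (ha : 3 ≤ a) (k : ℤ) : Cj a (theta1 a ^ k) (theta1 a ^ (-k)) := by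
  obtain ⟨n, rfl | rfl⟩ := k.eq_nat_or_neg
  · simpa using Cj.theta.pow ha n
  · simpa using (Cj.theta_inv' ha).pow ha n

lemma Cj.sum {ι : Type*} (s : Finset ι) {f g : ι → ℝ} (h : ∀ i ∈ s, Cj a (f i) (g i)) :
    Cj a (∑ i ∈ s, f i) (∑ i ∈ s, g i) := by
  classical
  induction s using Finset.induction_on with
  | empty => simpa using Cj.int (a := a) 0
  | insert i s hi ih =>
    rw [Finset.sum_insert hi, Finset.sum_insert hi]
    exact (h i (by simp)).add (ih fun j hj => h j (by simp [hj]))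

lemma Cj.unique (ha : 3 ≤ a) {x y z : ℝ} (h : Cj a x y) (h' : Cj a x z) : y = z := by
  have := (h.sub h').eq_zero ha (by simp)
  linarith [this.2]

/-! ### Finiteness of the expansion of totally positive elements -/

/-- If `x = p + qθ < θ` and `x' ≥ 0` then `q ≤ 0`, whence `x ≤ x'`. Indeed `q ≥ 2` would give
`x ≥ x - x' = q(θ - θ⁻¹) > θ`, and `q = 1` forces `p < 0` and so `x' < 0`. -/
lemma Cj.le_conj (ha : 3 ≤ a) {x y : ℝ} (h : Cj a x y) (hy : 0 ≤ y)
    (hx : x < theta1 a) : x ≤ y := by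
  obtain ⟨p, q, rfl, rfl⟩ := h
  have h2 := theta_gt_two ha
  have h3 := theta_inv_lt ha
  have h4 := theta_inv_pos ha
  rcases le_or_gt q 0 with hq | hq
  · have : (q : ℝ) ≤ 0 := by exact_mod_cast hq
    nlinarith
  · exfalso
    rcases eq_or_lt_of_le (Int.add_one_le_iff.mpr hq) with h1 | h1
    · obtain rfl : q = 1 := by omega
      have : (p : ℝ) < 0 := by simpa using hx
      have : p ≤ -1 := by
        have : p < 0 := by exact_mod_cast this
        omega
      have : (p : ℝ) ≤ -1 := by exact_mod_cast this
      simp at hy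
      linarith
    · have : 2 ≤ q := by omega
      have : (2 : ℝ) ≤ q := by exact_mod_cast this
      nlinarith

/-- Greedy algorithm on a totally nonnegative `r ∈ [0, 1)` with `r' < θⁿ`: it terminates after `n`
digits. The last clause is the strengthening needed to exclude forbidden blocks: after a digit
`a - 1` the remainder is less than `1 - θ⁻¹`, and this bound persists as long as the digits are
`a - 2`. -/
lemma greedy (ha : 3 ≤ a) (n : ℕ) : ∀ r r' : ℝ, Cj a r r' → 0 ≤ r → r < 1 → 0 ≤ r' →
    r' < theta1 a ^ n →
    ∃ b : ℤ → ℤ, AdmissibleOn1 a 0 ((n : ℤ) - 1) b ∧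
      theta1 a ^ n * r = ∑ i ∈ Finset.Ico (0 : ℤ) n, (b i : ℝ) * theta1 a ^ i ∧
      (r < 1 - (theta1 a)⁻¹ → ¬ ∃ j : ℤ, j < n ∧ b j = (a : ℤ) - 1 ∧
        ∀ k, j < k → k < n → b k = (a : ℤ) - 2) := by
  have hθ := theta_pos ha
  have haZ : (3 : ℤ) ≤ a := by exact_mod_cast ha
  induction n with
  | zero =>
    intro r r' h h0 h1 h0' h1'
    have hr : r = 0 := by
      refine (h.eq_zero ha ?_).1
      rw [abs_of_nonneg (by positivity)]
      simp at h1'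
      nlinarith
    refine ⟨fun _ => 0, ⟨by simp, fun i => ⟨le_rfl, show (0 : ℤ) ≤ (a : ℤ) - 1 by omega⟩, ?_⟩, by simp [hr], ?_⟩
    · rintro ⟨i, j, -, hi, -⟩
      simp at hi
      omega
    · rintro - ⟨j, -, hj, -⟩
      simp at hj
      omega
  | succ n ih =>
    intro r r' h h0 h1 h0' h1'
    have hlt : theta1 a * r < theta1 a := by nlinarith
    have hc := Cj.theta.mul ha h
    have hle := hc.le_conj ha (mul_nonneg (theta_inv_pos ha).le h0') hlt
    set d : ℤ := ⌊theta1 a * r⌋ with hd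
    have hd1 : (d : ℝ) ≤ theta1 a * r := Int.floor_le _
    have hd2 : theta1 a * r < d + 1 := Int.lt_floor_add_one _
    have hd0 : 0 ≤ d := Int.floor_nonneg.mpr (by positivity)
    have hd0' : (0 : ℝ) ≤ d := by exact_mod_cast hd0
    have hda : d ≤ (a : ℤ) - 1 := by
      have : (d : ℝ) < a := by linarith [theta_lt ha]
      have : d < (a : ℤ) := by exact_mod_cast this
      omega
    obtain ⟨c, ⟨hc1, hc2, hc3⟩, hcs, hcg⟩ := ih (theta1 a * r - d) ((theta1 a)⁻¹ * r' - d)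
      (hc.sub (Cj.int d)) (by linarith) (by linarith) (by linarith) (by
        have : (theta1 a)⁻¹ * r' < theta1 a ^ n := by
          rw [inv_mul_lt_iff₀ hθ]
          rwa [pow_succ'] at h1'
        linarith)
    have hcn : c n = 0 := by
      by_contra hne
      have := (hc1 n hne).2
      omega
    have hinv := theta_inv ha
    refine ⟨Function.update c n d, ⟨?_, ?_, ?_⟩, ?_, ?_⟩
    · intro i hi
      by_cases hin : i = n
      · subst hin; push_cast; omega
      · rw [Function.update_of_ne hin] at hi
        have := hc1 i hi
        push_cast; omega
    · intro i
      by_cases hin : i = n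
      · subst hin; rw [Function.update_self]; exact ⟨hd0, hda⟩
      · rw [Function.update_of_ne hin]; exact hc2 i
    · rintro ⟨i, j, hij, hi, hj, hk⟩
      have hjn : j ≤ n := by
        by_contra hjn
        rw [Function.update_of_ne (by omega)] at hj
        have := (hc1 j (by omega)).2
        omega
      rw [Function.update_of_ne (by omega)] at hi
      by_cases hjn' : j = n
      · subst hjn'
        have hdeq : d = (a : ℤ) - 1 := by simpa using hj
        have hdeq' : (d : ℝ) = a - 1 := by rw [hdeq]; push_cast; ring
        refine hcg (by rw [hinv]; linarith) ⟨i, hij, hi, fun k h1 h2 => ?_⟩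
        have := hk k h1 h2
        rwa [Function.update_of_ne (by omega)] at this
      · rw [Function.update_of_ne hjn'] at hj
        refine hc3 ⟨i, j, hij, hi, hj, fun k h1 h2 => ?_⟩
        have := hk k h1 h2
        rwa [Function.update_of_ne (by omega)] at this
    · have hI : Finset.Ico (0 : ℤ) ((n + 1 : ℕ) : ℤ) = insert (n : ℤ) (Finset.Ico (0 : ℤ) n) := by
        ext i; simp
      rw [hI, Finset.sum_insert (by simp)]
      have hs : ∑ i ∈ Finset.Ico (0 : ℤ) n, ((Function.update c n d i : ℤ) : ℝ) * theta1 a ^ i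
          = ∑ i ∈ Finset.Ico (0 : ℤ) n, (c i : ℝ) * theta1 a ^ i := by
        refine Finset.sum_congr rfl fun i hi => ?_
        rw [Function.update_of_ne (by simp at hi; omega)]
      rw [hs, ← hcs]
      simp
      ring
    · rintro hr ⟨j, hj, hja, hk⟩
      have hθr : theta1 a * r < theta1 a - 1 := by
        have : theta1 a * r < theta1 a * (1 - (theta1 a)⁻¹) := by gcongr
        rwa [mul_sub, mul_inv_cancel₀ hθ.ne', mul_one] at this
      have hd3 : d < (a : ℤ) - 1 := by
        have : (d : ℝ) < a - 1 := by linarith [theta_lt ha]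
        exact_mod_cast this
      by_cases hjn : j = n
      · subst hjn
        simp at hja
        omega
      · rw [Function.update_of_ne hjn] at hja
        push_cast at hj
        have hdeq : d = (a : ℤ) - 2 := by simpa using hk n (by omega) (by push_cast; omega)
        have hdeq' : (d : ℝ) = a - 2 := by rw [hdeq]; push_cast; ring
        refine hcg (by rw [hinv]; linarith) ⟨j, by omega, hja, fun k h1 h2 => ?_⟩
        have := hk k h1 (by push_cast; omega)
        rwa [Function.update_of_ne (by omega)] at this

lemma exists_expansion_pos (ha : 3 ≤ a) {x y : ℝ} (h : Cj a x y) (hx : 0 ≤ x) (hy : 0 ≤ y) :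
    ∃ (k M : ℤ) (b : ℤ → ℤ), 0 ≤ M ∧ AdmissibleOn1 a 0 M b ∧
      x / theta1 a ^ k = ∑ i ∈ Finset.Icc (0 : ℤ) M, (b i : ℝ) * theta1 a ^ i := by
  have hθ := theta_pos ha
  have hθ1 : 1 < theta1 a := by linarith [theta_gt_two ha]
  obtain ⟨m, hm⟩ := pow_unbounded_of_one_lt x hθ1
  obtain ⟨n, hn⟩ := pow_unbounded_of_one_lt (y * theta1 a ^ m) hθ1
  have hc : Cj a (x * theta1 a ^ (-(m : ℤ))) (y * theta1 a ^ m) := by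
    simpa using h.mul ha (Cj.zpow ha (-(m : ℤ)))
  obtain ⟨b, ⟨h1, h2, h3⟩, hs, -⟩ := greedy ha n _ _ hc (by positivity)
    (by rw [zpow_neg, zpow_natCast, ← div_eq_mul_inv, div_lt_one (by positivity)]; exact hm)
    (by positivity) hn
  refine ⟨m - n, n, b, by positivity, ⟨fun i hi => ?_, h2, h3⟩, ?_⟩
  · have := h1 i hi
    omega
  · have hI : ∑ i ∈ Finset.Icc (0 : ℤ) n, (b i : ℝ) * theta1 a ^ i =
        ∑ i ∈ Finset.Ico (0 : ℤ) n, (b i : ℝ) * theta1 a ^ i := by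
      symm
      refine Finset.sum_subset Finset.Ico_subset_Icc_self fun i hi hi' => ?_
      have : b i = 0 := by
        by_contra hne
        have := h1 i hne
        simp at hi hi'
        omega
      simp [this]
    rw [hI, ← hs, zpow_sub₀ hθ.ne', zpow_neg, zpow_natCast, zpow_natCast]
    field_simp

lemma nonempty_exponents (ha : 3 ≤ a) {x y : ℝ} (h : Cj a x y) (hxy : 0 ≤ x * y) (hx : x ≠ 0) :
    { k : ℤ | x / theta1 a ^ k ∈ Ztheta1 a }.Nonempty := by
  rcases lt_or_gt_of_ne hx with hx | hx
  · have hc : Cj a (-x) (-y) := by simpa using (Cj.int (a := a) 0).sub h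
    obtain ⟨k, M, b, hM, hb, hs⟩ :=
      exists_expansion_pos ha hc (by linarith) (by nlinarith)
    refine ⟨k, -1, M, b, Or.inr rfl, hM, hb, ?_⟩
    rw [← hs]; push_cast; ring
  · obtain ⟨k, M, b, hM, hb, hs⟩ :=
      exists_expansion_pos ha h hx.le (nonneg_of_mul_nonneg_right hxy hx)
    refine ⟨k, 1, M, b, Or.inl rfl, hM, hb, ?_⟩
    rw [← hs]; push_cast; ring

/-! ### The infranorm and the absolute value of the conjugate -/

/-- Conjugating an expansion replaces `θⁱ` by `θ⁻ⁱ`. -/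
lemma abs_conj_eq (ha : 3 ≤ a) {x y : ℝ} (h : Cj a x y) {k ε M : ℤ} {b : ℤ → ℤ}
    (hε : ε = 1 ∨ ε = -1) (hb : ∀ i, 0 ≤ b i)
    (hs : x / theta1 a ^ k = (ε : ℝ) * ∑ i ∈ Finset.Icc (0 : ℤ) M, (b i : ℝ) * theta1 a ^ i) :
    |y| * theta1 a ^ k = ∑ i ∈ Finset.Icc (0 : ℤ) M, (b i : ℝ) * theta1 a ^ (-i) := by
  have hθ := theta_pos ha
  have h1 : Cj a (x / theta1 a ^ k) (y * theta1 a ^ k) := by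
    have := h.mul ha (Cj.zpow ha (-k))
    rwa [neg_neg, zpow_neg, ← div_eq_mul_inv] at this
  rw [hs] at h1
  have h2 := (Cj.int ε).mul ha (Cj.sum (a := a) (Finset.Icc (0 : ℤ) M)
    (f := fun i => (b i : ℝ) * theta1 a ^ i) (g := fun i => (b i : ℝ) * theta1 a ^ (-i))
    fun i _ => (Cj.int (b i)).mul ha (Cj.zpow ha i))
  have h3 := h1.unique ha h2
  have h4 : 0 ≤ ∑ i ∈ Finset.Icc (0 : ℤ) M, (b i : ℝ) * theta1 a ^ (-i) :=
    Finset.sum_nonneg fun i _ => mul_nonneg (by exact_mod_cast hb i) (by positivity)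
  have h5 : |(ε : ℝ)| = 1 := by rcases hε with rfl | rfl <;> simp
  have h6 : (0 : ℝ) < theta1 a ^ k := by positivity
  rw [← abs_of_pos h6, ← abs_mul, h3, abs_mul, h5, one_mul, abs_of_nonneg h4]

lemma geom_bound (ha : 3 ≤ a) (M : ℕ) :
    ∑ i ∈ Finset.Icc (0 : ℤ) M, theta1 a ^ (-i) * (theta1 a - 1) =
      theta1 a - theta1 a ^ (-(M : ℤ)) := by
  have hθ := theta_pos ha
  induction M with
  | zero => simp
  | succ n ih =>
    have hI : Finset.Icc (0 : ℤ) ((n + 1 : ℕ) : ℤ) = insert (n + 1 : ℤ) (Finset.Icc (0 : ℤ) n) := by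
      ext i; simp; omega
    rw [hI, Finset.sum_insert (by simp), ih]
    have : theta1 a ^ (-(n : ℤ)) = theta1 a ^ (-(n + 1 : ℤ)) * theta1 a := by
      rw [← zpow_add_one₀ hθ.ne']; congr 1; ring
    push_cast
    rw [this]; ring

/-- The crude bound `θ²` (instead of the sharp `θ`) uses only that the digits are at most `a - 1`. -/
lemma digits_bound (ha : 3 ≤ a) {M : ℤ} (hM : 0 ≤ M) {b : ℤ → ℤ} (hb : ∀ i, b i ≤ (a : ℤ) - 1) :
    ∑ i ∈ Finset.Icc (0 : ℤ) M, (b i : ℝ) * theta1 a ^ (-i) < theta1 a ^ 2 := by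
  have hθ := theta_pos ha
  have h2 := theta_gt_two ha
  have h3 := theta_gt ha
  have haR : (3 : ℝ) ≤ a := by exact_mod_cast ha
  lift M to ℕ using hM
  have hg := geom_bound ha M
  rw [← Finset.sum_mul] at hg
  have hp : 0 < theta1 a ^ (-(M : ℤ)) := by positivity
  have hle : ∑ i ∈ Finset.Icc (0 : ℤ) M, (b i : ℝ) * theta1 a ^ (-i) ≤
      ((a : ℝ) - 1) * ∑ i ∈ Finset.Icc (0 : ℤ) M, theta1 a ^ (-i) := by
    rw [Finset.mul_sum]
    refine Finset.sum_le_sum fun i _ => ?_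
    have : (b i : ℝ) ≤ (a : ℝ) - 1 := by exact_mod_cast hb i
    gcongr
  refine lt_of_le_of_lt hle ?_
  set S := ∑ i ∈ Finset.Icc (0 : ℤ) M, theta1 a ^ (-i)
  have hS : S < 2 := by nlinarith
  have hS0 : 0 ≤ S := Finset.sum_nonneg fun i _ => by positivity
  nlinarith

/-- If the lowest digit vanishes the expansion can be divided by `θ`. -/
lemma Ztheta_shift (ha : 3 ≤ a) {x : ℝ} {ε M : ℤ} {b : ℤ → ℤ} (hε : ε = 1 ∨ ε = -1) (hM : 0 ≤ M)
    (hb : AdmissibleOn1 a 0 M b) (h0 : b 0 = 0)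
    (hs : x = (ε : ℝ) * ∑ i ∈ Finset.Icc (0 : ℤ) M, (b i : ℝ) * theta1 a ^ i) :
    x / theta1 a ∈ Ztheta1 a := by
  have hθ := theta_pos ha
  obtain ⟨h1, h2, h3⟩ := hb
  refine ⟨ε, M, fun i => b (i + 1), hε, hM, ⟨fun i hi => ?_, fun i => h2 _, ?_⟩, ?_⟩
  · have := h1 _ hi
    have hne : i + 1 ≠ 0 := fun h => hi (by simp [h, h0])
    omega
  · rintro ⟨i, j, hij, hi, hj, hk⟩
    refine h3 ⟨i + 1, j + 1, by omega, hi, hj, fun k hk1 hk2 => ?_⟩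
    have := hk (k - 1) (by omega) (by omega)
    simpa using this
  · have e1 : ∑ i ∈ Finset.Icc (0 : ℤ) M, (b i : ℝ) * theta1 a ^ i =
        ∑ i ∈ Finset.Icc (0 : ℤ) (M + 1), (b i : ℝ) * theta1 a ^ i := by
      refine Finset.sum_subset (Finset.Icc_subset_Icc_right (by omega)) fun i hi hi' => ?_
      have : b i = 0 := by
        by_contra hne
        have := h1 i hne
        simp at hi hi'
        omega
      simp [this]
    have e2 : ∑ i ∈ Finset.Icc (1 : ℤ) (M + 1), (b i : ℝ) * theta1 a ^ i =
        ∑ i ∈ Finset.Icc (0 : ℤ) (M + 1), (b i : ℝ) * theta1 a ^ i := by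
      refine Finset.sum_subset (Finset.Icc_subset_Icc_left (by omega)) fun i hi hi' => ?_
      have : i = 0 := by simp at hi hi'; omega
      simp [this, h0]
    have e3 : ∑ i ∈ Finset.Icc (1 : ℤ) (M + 1), (b i : ℝ) * theta1 a ^ i =
        ∑ i ∈ Finset.Icc (0 : ℤ) M, (b (i + 1) : ℝ) * theta1 a ^ (i + 1) := by
      have : Finset.Icc (1 : ℤ) (M + 1) = (Finset.Icc (0 : ℤ) M).map (addRightEmbedding 1) := by
        rw [Finset.map_add_right_Icc]; simp
      rw [this, Finset.sum_map]
      rfl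
    rw [hs, e1, ← e2, e3, mul_div_assoc, Finset.sum_div]
    congr 1
    refine Finset.sum_congr rfl fun i _ => ?_
    rw [zpow_add_one₀ hθ.ne']
    field_simp

lemma vval_bounds (ha : 3 ≤ a) {x y : ℝ} (h : Cj a x y) (hxy : 0 ≤ x * y) (hx : x ≠ 0) :
    theta1 a ^ (-vval1 a x) ≤ |y| ∧ |y| < theta1 a ^ (-vval1 a x + 2) := by
  have hθ := theta_pos ha
  have hθ1 : 1 < theta1 a := by linarith [theta_gt_two ha]
  have hy : y ≠ 0 := by
    rintro rfl
    exact hx (h.eq_zero ha (by simp)).1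
  have hub : ∀ k : ℤ, x / theta1 a ^ k ∈ Ztheta1 a → |y| < theta1 a ^ (-k + 2) := by
    rintro k ⟨ε, M, b, hε, hM, hb, hs⟩
    have e := abs_conj_eq ha h hε (fun i => (hb.2.1 i).1) hs
    have := digits_bound ha hM (fun i => (hb.2.1 i).2)
    rw [← e] at this
    rw [zpow_add₀ hθ.ne', zpow_neg, inv_mul_eq_div, lt_div_iff₀ (by positivity)]
    exact_mod_cast this
  have hbdd : BddAbove { k : ℤ | x / theta1 a ^ k ∈ Ztheta1 a } := by
    obtain ⟨l, hl, -⟩ := exists_mem_Ico_zpow (abs_pos.mpr hy) hθ1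
    refine ⟨2 - l, fun k hk => ?_⟩
    have := (zpow_lt_zpow_iff_right₀ hθ1).mp (lt_of_le_of_lt hl (hub k hk))
    omega
  have hmem : x / theta1 a ^ vval1 a x ∈ Ztheta1 a :=
    Int.csSup_mem (nonempty_exponents ha h hxy hx) hbdd
  refine ⟨?_, hub _ hmem⟩
  obtain ⟨ε, M, b, hε, hM, hb, hs⟩ := hmem
  have hb0 : b 0 ≠ 0 := by
    intro h0
    have h1 := Ztheta_shift ha hε hM hb h0 hs
    rw [div_div, ← zpow_add_one₀ hθ.ne'] at h1
    have : vval1 a x + 1 ≤ vval1 a x := le_csSup hbdd h1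
    omega
  have hb1 : (1 : ℝ) ≤ b 0 := by
    have := (hb.2.1 0).1
    have : 1 ≤ b 0 := by omega
    exact_mod_cast this
  have e := abs_conj_eq ha h hε (fun i => (hb.2.1 i).1) hs
  have : (b 0 : ℝ) * theta1 a ^ (-(0 : ℤ)) ≤
      ∑ i ∈ Finset.Icc (0 : ℤ) M, (b i : ℝ) * theta1 a ^ (-i) :=
    Finset.single_le_sum (f := fun i : ℤ => (b i : ℝ) * theta1 a ^ (-i))
      (fun i _ => mul_nonneg (by exact_mod_cast (hb.2.1 i).1) (by positivity))
      (by simpa using hM)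
  rw [← e] at this
  rw [zpow_neg, inv_le_iff_one_le_mul₀ (by positivity)]
  simp at this
  linarith

/-- The infranorm of `x` is within a factor `θ³` of `|x'|`. -/
lemma norm_bounds (ha : 3 ≤ a) {x y : ℝ} (h : Cj a x y) (hx : x ≠ 0) :
    ∃ n : ℤ, thNorm1 a x = theta1 a ^ n ∧ theta1 a ^ n ≤ |y| ∧ |y| < theta1 a ^ (n + 3) := by
  have hθ := theta_pos ha
  have h2 := theta_gt_two ha
  have hi := theta_inv_lt ha
  have hi0 := theta_inv_pos ha
  unfold thNorm1
  rw [if_neg hx]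
  split_ifs with hok
  · obtain ⟨p, q, e1, e2⟩ := hok
    have hz : Cj a x ((p : ℝ) + (q : ℝ) * (theta1 a)⁻¹) := ⟨p, q, e1, rfl⟩
    rw [hz.unique ha h] at e2
    obtain ⟨b1, b2⟩ := vval_bounds ha h e2 hx
    refine ⟨_, rfl, b1, b2.trans_le ?_⟩
    exact zpow_le_zpow_right₀ (by linarith) (by omega)
  · have hneg : x * y < 0 := by
      by_contra hcon
      push Not at hcon
      obtain ⟨p, q, e1, e2⟩ := h
      exact hok ⟨p, q, e1, by rwa [← e2]⟩
    have hT : Cj a ((theta1 a - 1) * x) (((theta1 a)⁻¹ - 1) * y) := by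
      have := (Cj.theta.sub (Cj.int (a := a) 1)).mul ha h
      simpa using this
    obtain ⟨b1, b2⟩ := vval_bounds ha hT (by
      have : (theta1 a - 1) * x * (((theta1 a)⁻¹ - 1) * y) =
        ((theta1 a - 1) * (1 - (theta1 a)⁻¹)) * -(x * y) := by ring
      rw [this]
      exact mul_nonneg (mul_nonneg (by linarith) (by linarith)) (by linarith))
      (mul_ne_zero (by linarith) hx)
    have hab : |((theta1 a)⁻¹ - 1) * y| = (1 - (theta1 a)⁻¹) * |y| := by
      rw [abs_mul, abs_of_neg (by linarith)]; ring
    rw [hab] at b1 b2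
    have hy := abs_nonneg y
    refine ⟨_, rfl, by nlinarith, ?_⟩
    rw [show -vval1 a ((theta1 a - 1) * x) + 3 = (-vval1 a ((theta1 a - 1) * x) + 2) + 1 by ring,
      zpow_add_one₀ hθ.ne']
    nlinarith [zpow_pos hθ (-vval1 a ((theta1 a - 1) * x) + 2)]

lemma conj_le (ha : 3 ≤ a) {x y : ℝ} (h : Cj a x y) : |y| ≤ thNorm1 a x * theta1 a ^ 3 := by
  have hθ := theta_pos ha
  by_cases hx : x = 0
  · subst hx
    rw [(h.eq_zero ha (by simp)).2]
    simp [thNorm1]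
  · obtain ⟨n, e, -, h2⟩ := norm_bounds ha h hx
    rw [e]
    rw [zpow_add₀ hθ.ne'] at h2
    exact_mod_cast h2.le

lemma thNorm_nonneg (ha : 3 ≤ a) (x : ℝ) : 0 ≤ thNorm1 a x := by
  have hθ := theta_pos ha
  unfold thNorm1
  split_ifs <;> positivity

lemma thNorm_le (ha : 3 ≤ a) {x y : ℝ} (h : Cj a x y) : thNorm1 a x ≤ |y| := by
  by_cases hx : x = 0
  · simp [thNorm1, hx]
  · obtain ⟨n, e, h1, -⟩ := norm_bounds ha h hx
    rwa [e]

end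

/-! ### Infraoscillation -/

/-- Infraoscillation, norm `1` case. Let `{f_n} ⊆ ℤ[θ]` be a `|·|_θ`-Cauchy
sequence such that `|f_n|_θ` does not converge to `0`. Then there exist `m : ℤ` and `N` such
that `|f_n|_θ ∈ {θ^m, θ^{m+1}, θ^{m+2}, θ^{m+3}, θ^{m+4}}` for all `n ≥ N`. -/
theorem infraoscillation_pos_one (a : ℕ) (ha : 3 ≤ a) (f : ℕ → ℝ)
    (hf : ∀ n, inR1 a (f n)) (hc : IsThCauchy1 a f)
    (hnz : ¬ Filter.Tendsto (fun n => thNorm1 a (f n)) Filter.atTop (nhds 0)) :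
    ∃ (m : ℤ) (N : ℕ), ∀ n, N ≤ n →
      thNorm1 a (f n) = theta1 a ^ m ∨ thNorm1 a (f n) = theta1 a ^ (m + 1) ∨
        thNorm1 a (f n) = theta1 a ^ (m + 2) ∨ thNorm1 a (f n) = theta1 a ^ (m + 3) ∨
          thNorm1 a (f n) = theta1 a ^ (m + 4) := by

  have hθ := theta_pos ha
  have h2 := theta_gt_two ha
  have hθ1 : 1 < theta1 a := by linarith
  have hg : ∀ n, ∃ y, Cj a (f n) y := fun n => by
    obtain ⟨p, q, e⟩ := hf n
    exact ⟨_, p, q, e, rfl⟩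
  choose g hg using hg
  obtain ⟨c, hc0, hfreq⟩ : ∃ c : ℝ, 0 < c ∧ ∀ N, ∃ n, N ≤ n ∧ c ≤ thNorm1 a (f n) := by
    by_contra hcon
    push Not at hcon
    refine hnz (Metric.tendsto_atTop.mpr fun ε hε => ?_)
    obtain ⟨N, hN⟩ := hcon ε hε
    refine ⟨N, fun n hn => ?_⟩
    rw [Real.dist_eq, sub_zero, abs_of_nonneg (thNorm_nonneg ha _)]
    exact hN n hn
  -- With this tolerance the conjugates eventually differ by less than `c / 2`.
  obtain ⟨N, hN⟩ := hc (c / 2 / theta1 a ^ 3) (by positivity)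
  obtain ⟨n₀, hn₀, hcn⟩ := hfreq N
  have hL : c ≤ |g n₀| := hcn.trans (thNorm_le ha (hg n₀))
  obtain ⟨l, hl1, hl2⟩ := exists_mem_Ico_zpow (lt_of_lt_of_le hc0 hL) hθ1
  refine ⟨l - 3, N, fun n hn => ?_⟩
  have hd : |g n - g n₀| < c / 2 := by
    refine lt_of_le_of_lt (conj_le ha ((hg n).sub (hg n₀))) ?_
    rw [← lt_div_iff₀ (by positivity)]
    exact hN n n₀ hn hn₀
  have hup : |g n| < |g n₀| * theta1 a := by
    have := abs_sub_abs_le_abs_sub (g n) (g n₀)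
    nlinarith
  have hlo : |g n₀| < |g n| * theta1 a := by
    have := abs_sub_abs_le_abs_sub (g n₀) (g n)
    rw [abs_sub_comm] at this
    nlinarith
  have hne : f n ≠ 0 := by
    intro h0
    have h1 := hg n
    rw [h0] at h1
    rw [(h1.eq_zero ha (by simp)).2] at hlo
    simp at hlo
    linarith [abs_nonneg (g n₀)]
  obtain ⟨k, hk, hk1, hk2⟩ := norm_bounds ha (hg n) hne
  have hk3 : k < l + 1 + 1 := by
    rw [← zpow_lt_zpow_iff_right₀ hθ1, zpow_add_one₀ hθ.ne']
    nlinarith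
  have hk4 : l < k + 3 + 1 := by
    rw [← zpow_lt_zpow_iff_right₀ hθ1, zpow_add_one₀ hθ.ne']
    nlinarith
  rw [hk]
  have : k = l - 3 ∨ k = l - 3 + 1 ∨ k = l - 3 + 2 ∨ k = l - 3 + 3 ∨ k = l - 3 + 4 := by omega
  rcases this with h | h | h | h | h <;> simp [h]
end
end

section
/- Structure of mixed-sign elements (norm 1 case): let α ∈ ℤ[θ] with α > 0 and Galois conjugate α' < 0. Then there exist an integer m and an element β ∈ ℤ[θ] with β ≥ 0 and β' ≥ 0 (so β ∈ O_K⁰) such that α = β + θ^m·T, where T = θ − 1; moreover β = 0 or β/θ^{m+1} ∈ ℤ_θ. -/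
/-!
Write `x = r + sθ` and `x' = r + sθ⁻¹`. The forbidden blocks are palindromic, so reading an
admissible sequence backwards turns the expansion `x = Σ bᵢ θ^i` into the greedy expansion
`x' = Σ bᵢ θ^{-i}` of the conjugate. Hence every `x` with `s ≥ 0` and `0 ≤ x' < θ` is a θ-integer:
the digits are produced by the greedy algorithm applied to `x'`, namely `b = ⌊x'⌋` followed by
`x ↦ (x - b)/θ` (`greedyStep`). This map preserves `s ≥ 0` and `0 ≤ x' < θ`
(`greedyState_invariant`), and strictly decreases `s` while `s > 0`, so it terminates
(`greedyState_eq_zero`). A digit `a - 1` forces the next conjugate below `θ - 1`, a digit `a - 2`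
keeps it there, and a digit `a - 1` is impossible below `θ - 1`; this is admissibility
(`greedy_no_block`). Altogether this gives `mem_Ztheta1`.

For `α > 0 > α'`, put `m = -(n + 1)` with `n` large. Then `γ = β/θ^{m+1} = αθ^n - (1 - θ⁻¹)` is
large and positive, while `γ' = α'θ^{-n} + θ - 1` lies in `[0, θ)`, so `γ` is a θ-integer.
-/


noncomputable section

/-! ### The unit θ -/

lemma theta1_sq (a : ℕ) (ha : 3 ≤ a) : theta1 a ^ 2 = a * theta1 a - 1 := by
  have h : (3 : ℝ) ≤ a := by exact_mod_cast ha
  have := Real.sq_sqrt (show (0 : ℝ) ≤ (a : ℝ) ^ 2 - 4 by nlinarith)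
  unfold theta1
  nlinarith

lemma theta1_lt (a : ℕ) (ha : 3 ≤ a) : theta1 a < a := by
  have h : (3 : ℝ) ≤ a := by exact_mod_cast ha
  have : Real.sqrt ((a : ℝ) ^ 2 - 4) < a := by
    rw [Real.sqrt_lt' (by linarith)]
    linarith
  unfold theta1
  linarith

lemma lt_theta1 (a : ℕ) (ha : 3 ≤ a) : (a : ℝ) - 1 < theta1 a := by
  have h : (3 : ℝ) ≤ a := by exact_mod_cast ha
  have : (a : ℝ) - 2 < Real.sqrt ((a : ℝ) ^ 2 - 4) := by
    apply Real.lt_sqrt_of_sq_lt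
    nlinarith
  unfold theta1
  linarith

lemma two_lt_theta1 (a : ℕ) (ha : 3 ≤ a) : 2 < theta1 a := by
  have h : (3 : ℝ) ≤ a := by exact_mod_cast ha
  linarith [lt_theta1 a ha]

lemma theta1_inv (a : ℕ) (ha : 3 ≤ a) : (theta1 a)⁻¹ = a - theta1 a := by
  apply inv_eq_of_mul_eq_one_right
  linarith [theta1_sq a ha]

/-! ### The greedy algorithm on conjugates -/

/-- The real embedding `r + sθ` of the element with coordinates `x = (r, s)`. -/
def val1 (a : ℕ) (x : ℤ × ℤ) : ℝ := (x.1 : ℝ) + (x.2 : ℝ) * theta1 a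

/-- The conjugate `r + sθ⁻¹` of the element with coordinates `x = (r, s)`. -/
def conj1 (a : ℕ) (x : ℤ × ℤ) : ℝ := (x.1 : ℝ) + (x.2 : ℝ) * (theta1 a)⁻¹

/-- One step `x ↦ (x - ⌊x'⌋)/θ` of the greedy algorithm, in coordinates. -/
def greedyStep (a : ℕ) (x : ℤ × ℤ) : ℤ × ℤ :=
  ((x.1 - ⌊conj1 a x⌋) * a + x.2, ⌊conj1 a x⌋ - x.1)

/-- The remainder after `n` greedy steps starting from `x`. -/
def greedyState (a : ℕ) (x : ℤ × ℤ) (n : ℕ) : ℤ × ℤ := (greedyStep a)^[n] x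

lemma greedyState_succ (a : ℕ) (x : ℤ × ℤ) (n : ℕ) :
    greedyState a x (n + 1) = greedyStep a (greedyState a x n) :=
  Function.iterate_succ_apply' _ _ _

lemma val1_eq (a : ℕ) (ha : 3 ≤ a) (x : ℤ × ℤ) :
    val1 a x = ⌊conj1 a x⌋ + theta1 a * val1 a (greedyStep a x) := by
  simp only [val1, greedyStep]
  push_cast
  linear_combination (-(⌊conj1 a x⌋ - (x.1 : ℝ))) * theta1_sq a ha

lemma conj1_greedyStep (a : ℕ) (ha : 3 ≤ a) (x : ℤ × ℤ) :
    conj1 a (greedyStep a x) = (conj1 a x - ⌊conj1 a x⌋) * theta1 a := by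
  generalize hb : ⌊conj1 a x⌋ = b
  simp only [conj1, greedyStep] at hb ⊢
  rw [hb, theta1_inv a ha]
  push_cast
  linear_combination (x.2 : ℝ) * theta1_sq a ha

/-- The region on which the greedy algorithm runs: `s ≥ 0` and `0 ≤ x' < θ`. -/
def Good1 (a : ℕ) (x : ℤ × ℤ) : Prop := 0 ≤ x.2 ∧ 0 ≤ conj1 a x ∧ conj1 a x < theta1 a

lemma Good1.step {a : ℕ} (ha : 3 ≤ a) {x : ℤ × ℤ} (hx : Good1 a x) :
    Good1 a (greedyStep a x) := by
  obtain ⟨h0, h1, h2⟩ := hx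
  have ht := two_lt_theta1 a ha
  refine ⟨?_, ?_, ?_⟩
  · simp only [greedyStep, sub_nonneg, Int.le_floor]
    have : 0 ≤ (x.2 : ℝ) * (theta1 a)⁻¹ :=
      mul_nonneg (by exact_mod_cast h0) (inv_nonneg.2 (by linarith))
    simp only [conj1]
    linarith
  · rw [conj1_greedyStep a ha]
    exact mul_nonneg (by linarith [Int.floor_le (conj1 a x)]) (by linarith)
  · rw [conj1_greedyStep a ha]
    nlinarith [Int.lt_floor_add_one (conj1 a x)]

lemma greedyState_invariant {a : ℕ} (ha : 3 ≤ a) {x : ℤ × ℤ} (hx : Good1 a x) (n : ℕ) :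
    Good1 a (greedyState a x n) := by
  induction n with
  | zero => exact hx
  | succ n ih => rw [greedyState_succ]; exact ih.step ha

/-- The second coordinate shrinks by the factor `θ`, and `θ > 2`. -/
lemma two_mul_greedyStep_snd {a : ℕ} (ha : 3 ≤ a) {x : ℤ × ℤ} (hx : Good1 a x) :
    2 * (greedyStep a x).2 ≤ x.2 := by
  have ht := two_lt_theta1 a ha
  have h1 : ((greedyStep a x).2 : ℝ) ≤ x.2 * (theta1 a)⁻¹ := by
    have := Int.floor_le (conj1 a x)
    simp only [greedyStep]
    push_cast
    have h : conj1 a x = x.1 + x.2 * (theta1 a)⁻¹ := rfl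
    linarith
  have h2 : (theta1 a)⁻¹ ≤ 2⁻¹ := inv_anti₀ (by norm_num) ht.le
  have h3 : (0 : ℝ) ≤ x.2 := by exact_mod_cast hx.1
  have : (2 : ℝ) * (greedyStep a x).2 ≤ x.2 := by nlinarith
  exact_mod_cast this

lemma greedyState_snd_le {a : ℕ} (ha : 3 ≤ a) {x : ℤ × ℤ} (hx : Good1 a x) (n : ℕ) :
    (greedyState a x n).2 ≤ max (x.2 - n) 0 := by
  induction n with
  | zero => simp [greedyState]
  | succ n ih =>
    have h := two_mul_greedyStep_snd ha (greedyState_invariant ha hx n)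
    have h' := (greedyState_invariant ha hx n).1
    rw [greedyState_succ]
    push_cast
    omega

lemma greedyState_eq_zero {a : ℕ} (ha : 3 ≤ a) {x : ℤ × ℤ} (hx : Good1 a x) (n : ℕ)
    (hn : x.2.toNat < n) : greedyState a x n = 0 := by
  obtain ⟨k, rfl⟩ : ∃ k, n = k + 1 := ⟨n - 1, by omega⟩
  have h := greedyState_snd_le ha hx k
  have h' := (greedyState_invariant ha hx k).1
  have h0 : (greedyState a x k).2 = 0 := by omega
  rw [greedyState_succ]
  simp [greedyStep, conj1, h0]

lemma val1_eq_sum {a : ℕ} (ha : 3 ≤ a) (x : ℤ × ℤ) (n : ℕ) :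
    val1 a x = ∑ i ∈ Finset.range n, (⌊conj1 a (greedyState a x i)⌋ : ℝ) * theta1 a ^ i
      + theta1 a ^ n * val1 a (greedyState a x n) := by
  induction n with
  | zero => simp [greedyState]
  | succ n ih =>
    rw [ih, Finset.sum_range_succ, greedyState_succ, val1_eq a ha (greedyState a x n)]
    ring

/-- After a digit `a - 1`, the conjugate stays below `θ - 1` through any run of digits `a - 2`. -/
lemma conj1_lt_of_run {a : ℕ} (ha : 3 ≤ a) {x : ℤ × ℤ} (hx : Good1 a x) (i d : ℕ)
    (hi : ⌊conj1 a (greedyState a x i)⌋ = (a : ℤ) - 1)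
    (hk : ∀ k, i < k → k < i + d + 1 → ⌊conj1 a (greedyState a x k)⌋ = (a : ℤ) - 2) :
    conj1 a (greedyState a x (i + d + 1)) < theta1 a - 1 := by
  have ht := two_lt_theta1 a ha
  have hs := theta1_sq a ha
  induction d with
  | zero =>
    rw [greedyState_succ, conj1_greedyStep a ha, hi]
    have := (greedyState_invariant ha hx i).2.2
    push_cast
    nlinarith
  | succ d ih =>
    have := ih fun k h1 h2 => hk k h1 (by omega)
    rw [greedyState_succ, conj1_greedyStep a ha, ← add_assoc, hk (i + d + 1) (by omega) (by omega)]
    push_cast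
    nlinarith

lemma greedy_no_block {a : ℕ} (ha : 3 ≤ a) {x : ℤ × ℤ} (hx : Good1 a x) (i j : ℕ) (hij : i < j)
    (hi : ⌊conj1 a (greedyState a x i)⌋ = (a : ℤ) - 1)
    (hj : ⌊conj1 a (greedyState a x j)⌋ = (a : ℤ) - 1)
    (hk : ∀ k, i < k → k < j → ⌊conj1 a (greedyState a x k)⌋ = (a : ℤ) - 2) : False := by
  obtain ⟨d, rfl⟩ : ∃ d, j = i + d + 1 := ⟨j - i - 1, by omega⟩
  have h1 := conj1_lt_of_run ha hx i d hi hk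
  have h2 := Int.floor_le (conj1 a (greedyState a x (i + d + 1)))
  rw [hj] at h2
  push_cast at h2
  linarith [theta1_lt a ha]

/-- Elements with `s ≥ 0` and `0 ≤ x' < θ` are θ-integers. -/
lemma mem_Ztheta1 {a : ℕ} (ha : 3 ≤ a) {x : ℤ × ℤ} (hx : Good1 a x) :
    val1 a x ∈ Ztheta1 a := by
  set b : ℤ → ℤ := fun i => if 0 ≤ i then ⌊conj1 a (greedyState a x i.toNat)⌋ else 0 with hb
  have hbn : ∀ i : ℤ, 0 ≤ i → b i = ⌊conj1 a (greedyState a x i.toNat)⌋ := fun i hi => if_pos hi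
  have hneg : ∀ i : ℤ, ¬ 0 ≤ i → b i = 0 := fun i hi => if_neg hi
  have ha' : (3 : ℤ) ≤ a := by exact_mod_cast ha
  refine ⟨1, x.2.toNat, b, Or.inl rfl, by positivity, ⟨?_, ?_, ?_⟩, ?_⟩
  · intro i hi
    by_cases h : 0 ≤ i
    · refine ⟨h, ?_⟩
      by_contra hlt
      apply hi
      rw [hbn i h, greedyState_eq_zero ha hx _ (by omega)]
      simp [conj1]
    · exact absurd (hneg i h) hi
  · intro i
    by_cases h : 0 ≤ i
    · rw [hbn i h]
      obtain ⟨-, h1, h2⟩ := greedyState_invariant ha hx i.toNat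
      refine ⟨Int.floor_nonneg.2 h1, ?_⟩
      have : ⌊conj1 a (greedyState a x i.toNat)⌋ < (a : ℤ) := by
        rw [Int.floor_lt]
        push_cast
        linarith [theta1_lt a ha]
      omega
    · rw [hneg i h]
      omega
  · rintro ⟨i, j, hij, hi, hj, hk⟩
    have hi0 : 0 ≤ i := by
      by_contra h
      rw [hneg i h] at hi
      omega
    rw [hbn i hi0] at hi
    rw [hbn j (by omega)] at hj
    refine greedy_no_block ha hx i.toNat j.toNat (by omega) hi hj fun k h1 h2 => ?_
    have := hk k (by omega) (by omega)
    rwa [hbn k (by omega), Int.toNat_natCast] at this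
  · rw [val1_eq_sum ha x (x.2.toNat + 1), greedyState_eq_zero ha hx _ (by omega)]
    simp only [val1, Prod.fst_zero, Prod.snd_zero, Int.cast_zero, zero_mul, add_zero, mul_zero,
      Int.cast_one, one_mul]
    refine Finset.sum_bij (fun (i : ℕ) _ => (i : ℤ)) ?_ ?_ ?_ ?_
    · intro i hi
      simp only [Finset.mem_range, Finset.mem_Icc] at hi ⊢
      omega
    · intro i _ j _ h
      exact_mod_cast h
    · intro j hj
      simp only [Finset.mem_Icc] at hj
      exact ⟨j.toNat, by simp only [Finset.mem_range]; omega, by omega⟩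
    · intro i _
      rw [hbn i (by omega), Int.toNat_natCast, zpow_natCast]

/-! ### Multiplication by powers of θ -/

lemma exists_mul_pow {a : ℕ} (ha : 3 ≤ a) (x : ℤ × ℤ) (n : ℕ) :
    ∃ y, val1 a y = val1 a x * theta1 a ^ n ∧ conj1 a x = conj1 a y * theta1 a ^ n := by
  induction n with
  | zero => exact ⟨x, by simp, by simp⟩
  | succ n ih =>
    obtain ⟨y, h1, h2⟩ := ih
    refine ⟨(-y.2, y.1 + a * y.2), ?_, ?_⟩
    · rw [pow_succ, ← mul_assoc, ← h1]
      simp only [val1]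
      push_cast
      linear_combination (-(y.2 : ℝ)) * theta1_sq a ha
    · have : conj1 a y = conj1 a (-y.2, y.1 + a * y.2) * theta1 a := by
        simp only [conj1, theta1_inv a ha]
        push_cast
        linear_combination ((y.1 : ℝ) + a * y.2) * theta1_sq a ha
      rw [h2, this]
      ring

lemma exists_div_pow {a : ℕ} (ha : 3 ≤ a) (x : ℤ × ℤ) (n : ℕ) :
    ∃ y, val1 a x = val1 a y * theta1 a ^ n ∧ conj1 a y = conj1 a x * theta1 a ^ n := by
  induction n with
  | zero => exact ⟨x, by simp, by simp⟩
  | succ n ih =>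
    obtain ⟨y, h1, h2⟩ := ih
    refine ⟨(y.1 * a + y.2, -y.1), ?_, ?_⟩
    · have : val1 a y = val1 a (y.1 * a + y.2, -y.1) * theta1 a := by
        simp only [val1]
        push_cast
        linear_combination (y.1 : ℝ) * theta1_sq a ha
      rw [h1, this]
      ring
    · rw [pow_succ, ← mul_assoc, ← h2]
      simp only [conj1, theta1_inv a ha]
      push_cast
      linear_combination (y.2 : ℝ) * theta1_sq a ha

/-- Structure of mixed-sign elements, norm `1` case. Let
`α = p + qθ ∈ ℤ[θ]` with `α > 0` and `α' = p + qθ⁻¹ < 0`. Then there are `m : ℤ` and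
`β = r + sθ ∈ ℤ[θ]` with `β ≥ 0` and `β' ≥ 0` (so `β ∈ O_K⁰`) such that `α = β + θ^m·T`,
where `T = θ − 1`; moreover `β = 0` or `β/θ^{m+1} ∈ ℤ_θ`. -/
theorem mixed_sign_structure_pos_one (a : ℕ) (ha : 3 ≤ a) (p q : ℤ)
    (hpos : 0 < (p : ℝ) + (q : ℝ) * theta1 a)
    (hconj : (p : ℝ) + (q : ℝ) * (theta1 a)⁻¹ < 0) :
    ∃ (m : ℤ) (r s : ℤ),
      0 ≤ (r : ℝ) + (s : ℝ) * theta1 a ∧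
      0 ≤ (r : ℝ) + (s : ℝ) * (theta1 a)⁻¹ ∧
      (p : ℝ) + (q : ℝ) * theta1 a =
        ((r : ℝ) + (s : ℝ) * theta1 a) + theta1 a ^ m * (theta1 a - 1) ∧
      ((r : ℝ) + (s : ℝ) * theta1 a = 0 ∨
        ((r : ℝ) + (s : ℝ) * theta1 a) / theta1 a ^ (m + 1) ∈ Ztheta1 a) := by
  have ht := two_lt_theta1 a ha
  have hta := theta1_lt a ha
  have hinv := theta1_inv a ha
  have hinv1 : (theta1 a)⁻¹ < 1 := inv_lt_one_of_one_lt₀ (by linarith)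
  have hinv0 : 0 < (theta1 a)⁻¹ := inv_pos.2 (by linarith)
  set α := (p : ℝ) + (q : ℝ) * theta1 a with hα
  -- `n` is chosen so that `αθ^n ≥ θ` and `|α'|θ^{-n} ≤ 1`
  obtain ⟨n, hn⟩ := pow_unbounded_of_one_lt
    (max (theta1 a / α) (-((p : ℝ) + (q : ℝ) * (theta1 a)⁻¹))) (by linarith : 1 < theta1 a)
  obtain ⟨hn1, hn2⟩ := max_lt_iff.1 hn
  rw [div_lt_iff₀ hpos] at hn1
  have hpow : 0 < theta1 a ^ n := pow_pos (by linarith) n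
  obtain ⟨y, hy1, hy2⟩ := exists_mul_pow ha (p, q) n
  have hy1' : val1 a y = α * theta1 a ^ n := hy1
  have hy2' : (p : ℝ) + (q : ℝ) * (theta1 a)⁻¹ = conj1 a y * theta1 a ^ n := hy2
  have hyneg : conj1 a y < 0 := by
    by_contra h
    push Not at h
    have := mul_nonneg h hpow.le
    linarith
  have hygt : -1 < conj1 a y := by
    by_contra h
    push Not at h
    nlinarith
  -- `z` is `γ = αθ^n - (1 - θ⁻¹) = αθ^n + (a - 1) - θ`
  set z : ℤ × ℤ := (y.1 + a - 1, y.2 - 1) with hz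
  have hz1 : val1 a z = val1 a y + (a - 1 - theta1 a) := by
    simp only [hz, val1]
    push_cast
    ring
  have hz2 : conj1 a z = conj1 a y + (theta1 a - 1) := by
    simp only [hz, conj1, hinv]
    push_cast
    ring
  have hzge : theta1 a - 1 ≤ val1 a z := by linarith
  have hgood : Good1 a z := by
    refine ⟨?_, by linarith, by linarith⟩
    have h1 : 0 < (z.2 : ℝ) * (theta1 a - (theta1 a)⁻¹) := by
      have : val1 a z - conj1 a z = (z.2 : ℝ) * (theta1 a - (theta1 a)⁻¹) := by
        simp only [val1, conj1]
        ring
      linarith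
    have h2 : 0 < (z.2 : ℝ) := (mul_pos_iff_of_pos_right (by linarith)).1 h1
    exact_mod_cast h2.le
  obtain ⟨w, hw1, hw2⟩ := exists_div_pow ha z n
  have hexp : theta1 a ^ (-(n : ℤ) - 1 + 1) = (theta1 a ^ n)⁻¹ := by
    rw [sub_add_cancel, zpow_neg, zpow_natCast]
  have hexp' : theta1 a ^ (-(n : ℤ) - 1) = (theta1 a ^ n)⁻¹ * (theta1 a)⁻¹ := by
    rw [zpow_sub_one₀ (by linarith), zpow_neg, zpow_natCast]
  refine ⟨-(n : ℤ) - 1, w.1, w.2, ?_, ?_, ?_, Or.inr ?_⟩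
  · change 0 ≤ val1 a w
    by_contra h
    push Not at h
    nlinarith
  · change 0 ≤ conj1 a w
    rw [hw2]
    exact mul_nonneg hgood.2.1 hpow.le
  · change α = val1 a w + _
    have h1 : (theta1 a)⁻¹ * (theta1 a - 1) = -(a - 1 - theta1 a) := by
      rw [mul_sub, inv_mul_cancel₀ (by linarith), hinv]
      ring
    rw [hexp', mul_assoc, h1]
    field_simp
    linarith
  · change val1 a w / _ ∈ _
    rw [hexp, div_inv_eq_mul, ← hw1]
    exact mem_Ztheta1 ha hgood
end
end
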